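/- arXiv:1207.1239 — 4 statements merged into one kernel-verified Lean document; each statement's English description precedes it below -/
import Mathlib

section
/- The incidence graph of points and lines of ℙ²(𝔽₄) contains no induced subgraph isomorphic to the extended Dynkin diagram D̃₂₀. -/
/-- The field with four elements. -/
abbrev F4 : Type := GaloisField 2 2

/-- The vector space `𝔽₄³`. -/
abbrev V3 : Type := Fin 3 → F4

/-- Points of `ℙ²(𝔽₄)`: 1-dimensional linear subspaces of `𝔽₄³`. -/
abbrev ProjPoint : Type := {P : Submodule F4 V3 // Module.finrank F4 P = 1}

/-- Lines of `ℙ²(𝔽₄)`: 2-dimensional linear subspaces of `𝔽₄³`. -/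
abbrev ProjLine : Type := {L : Submodule F4 V3 // Module.finrank F4 L = 2}

/-- The incidence relation: a point is adjacent to a line iff the point lies on the line. -/
def IncAdj : ProjPoint ⊕ ProjLine → ProjPoint ⊕ ProjLine → Prop
  | Sum.inl p, Sum.inr l => p.1 ≤ l.1
  | Sum.inr l, Sum.inl p => p.1 ≤ l.1
  | _, _ => False

/-- The incidence graph of points and lines of `ℙ²(𝔽₄)`. -/
def IncGraph : SimpleGraph (ProjPoint ⊕ ProjLine) where
  Adj := IncAdj
  symm := ⟨by rintro (p | l) (q | m) h <;> first | exact h.elim | exact h⟩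
  loopless := ⟨by rintro (p | l) h <;> exact h.elim⟩

/-- The (oriented) edges of the extended Dynkin diagram `D̃ₙ` on `{0, 1, …, n}`:
`{0,2}`, `{1,2}`, `{i,i+1}` for `2 ≤ i ≤ n-3`, `{n-2,n-1}` and `{n-2,n}`. -/
def DTAdj (n : ℕ) (a b : ℕ) : Prop :=
  (a = 0 ∧ b = 2) ∨ (a = 1 ∧ b = 2) ∨ (2 ≤ a ∧ a ≤ n - 3 ∧ b = a + 1) ∨
    (a = n - 2 ∧ b = n - 1) ∨ (a = n - 2 ∧ b = n)

/-- The extended Dynkin diagram `D̃ₙ` as a simple graph on `n + 1` vertices.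
(For `n ≥ 4` the vertices occurring in `DTAdj` are always distinct, so the
`a ≠ b` conjunct is redundant; it merely makes the graph loopless for all `n`.) -/
def DTilde (n : ℕ) : SimpleGraph (Fin (n + 1)) where
  Adj a b := a ≠ b ∧ (DTAdj n a.1 b.1 ∨ DTAdj n b.1 a.1)
  symm := ⟨fun _ _ h => ⟨h.1.symm, h.2.symm⟩⟩
  loopless := ⟨fun _ h => h.1 rfl⟩

/-- A simple graph `G` contains an induced subgraph isomorphic to `H` if there is an
injective map on vertices transporting adjacency in `H` exactly to adjacency in `G`. -/
def HasInducedCopy {α β : Type*} (H : SimpleGraph α) (G : SimpleGraph β) : Prop :=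
  ∃ f : α → β, Function.Injective f ∧ ∀ a b : α, G.Adj (f a) (f b) ↔ H.Adj a b

lemma inj_six {P : Type*} {a b c d e f : P} (ab : a ≠ b) (ac : a ≠ c) (bc : b ≠ c)
    (da : d ≠ a) (db : d ≠ b) (dc : d ≠ c) (ea : e ≠ a) (eb : e ≠ b) (ec : e ≠ c)
    (fa : f ≠ a) (fb : f ≠ b) (fc : f ≠ c) (de : d ≠ e) (df : d ≠ f) (ef : e ≠ f) :
    Function.Injective ![a, b, c, d, e, f] := by
  rw [← List.nodup_ofFn]
  simp [List.ofFn_succ]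
  grind

lemma forall_six {P : Type*} {Q : P → Prop} {a b c d e f : P} (ha : Q a) (hb : Q b) (hc : Q c)
    (hd : Q d) (he : Q e) (hf : Q f) (i : Fin 6) : Q (![a, b, c, d, e, f] i) := by
  fin_cases i <;> assumption

/-- Combinatorial core, valid in any projective plane of order at most four. -/
lemma core_config {P L : Type*} (I : P → L → Prop)
    (h1 : ∀ l m : L, l ≠ m → ∃ p, I p l ∧ I p m)
    (h2 : ∀ (p q : P) (l m : L), p ≠ q → I p l → I q l → I p m → I q m → l = m)
    (h3 : ∀ (l : L) (w : Fin 6 → P), Function.Injective w → ¬ ∀ i, I (w i) l)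
    (h4 : ∀ (p : P) (w : Fin 6 → L), Function.Injective w → ¬ ∀ i, I p (w i))
    (ℓ : Fin 9 → L) (hℓ : Function.Injective ℓ) (a b c a' b' c' : P)
    (hab : a ≠ b) (hac : a ≠ c) (hbc : b ≠ c) (hab' : a' ≠ b') (hac' : a' ≠ c') (hbc' : b' ≠ c')
    (ha : ∀ i, I a (ℓ i) ↔ i = 0) (hb : ∀ i, I b (ℓ i) ↔ i = 0)
    (hc : ∀ i, I c (ℓ i) ↔ i = 0 ∨ i = 1)
    (ha' : ∀ i, I a' (ℓ i) ↔ i = 8) (hb' : ∀ i, I b' (ℓ i) ↔ i = 8)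
    (hc' : ∀ i, I c' (ℓ i) ↔ i = 7 ∨ i = 8) : False := by
  have key : ∀ (l : L) (a b c d e f : P), a ≠ b → a ≠ c → b ≠ c → I a l → I b l → I c l →
      I d l → I e l → I f l → d ≠ a → d ≠ b → d ≠ c → e ≠ a → e ≠ b → e ≠ c →
      f ≠ a → f ≠ b → f ≠ c → d ≠ e → d ≠ f → e = f := by
    intro l a b c d e f ab ac bc ia ib ic id ie jf da db dc ea eb ec fa fb fc de df
    by_contra hef
    exact h3 l _ (inj_six ab ac bc da db dc ea eb ec fa fb fc de df hef)
      (forall_six (Q := fun x => I x l) ia ib ic id ie jf)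
  obtain ⟨q, hq0, hq8⟩ := h1 (ℓ 0) (ℓ 8) (fun h => by simpa using hℓ h)
  have hne : ∀ (p : P) (i : Fin 9), 2 ≤ i → I p (ℓ i) → p ≠ a ∧ p ≠ b ∧ p ≠ c := by
    intro p i hi hp
    refine ⟨?_, ?_, ?_⟩ <;> rintro rfl
    · have := (ha i).1 hp; omega
    · have := (hb i).1 hp; omega
    · have := (hc i).1 hp; omega
  have hne' : ∀ (p : P) (i : Fin 9), i ≤ 6 → I p (ℓ i) → p ≠ a' ∧ p ≠ b' ∧ p ≠ c' := by
    intro p i hi hp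
    refine ⟨?_, ?_, ?_⟩ <;> rintro rfl
    · have := (ha' i).1 hp; omega
    · have := (hb' i).1 hp; omega
    · have := (hc' i).1 hp; omega
  have two : ∀ i j : Fin 9, 2 ≤ i → i ≤ 6 → 2 ≤ j → j ≤ 6 → ¬ I q (ℓ i) → ¬ I q (ℓ j) →
      i = j := by
    intro i j hi hi' hj hj' hqi hqj
    obtain ⟨u, hu0, hui⟩ := h1 (ℓ 0) (ℓ i) (fun h => by have := hℓ h; omega)
    obtain ⟨u', hu0', huj⟩ := h1 (ℓ 0) (ℓ j) (fun h => by have := hℓ h; omega)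
    obtain ⟨v, hv0, hvi⟩ := h1 (ℓ 8) (ℓ i) (fun h => by have := hℓ h; omega)
    obtain ⟨v', hv0', hvj⟩ := h1 (ℓ 8) (ℓ j) (fun h => by have := hℓ h; omega)
    have e1 : q ≠ u := by rintro rfl; exact hqi hui
    have e2 : q ≠ u' := by rintro rfl; exact hqj huj
    have e3 : q ≠ v := by rintro rfl; exact hqi hvi
    have e4 : q ≠ v' := by rintro rfl; exact hqj hvj
    have f0 := hne q 8 (by decide) hq8
    have f0' := hne' q 0 (by decide) hq0
    have f1 := hne u i hi hui
    have f2 := hne u' j hj huj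
    have f3 := hne' v i hi' hvi
    have f4 := hne' v' j hj' hvj
    have huu : u = u' := key (ℓ 0) a b c q u u' hab hac hbc ((ha 0).2 rfl) ((hb 0).2 rfl)
      ((hc 0).2 (Or.inl rfl)) hq0 hu0 hu0' f0.1 f0.2.1 f0.2.2 f1.1 f1.2.1 f1.2.2
      f2.1 f2.2.1 f2.2.2 e1 e2
    have hvv : v = v' := key (ℓ 8) a' b' c' q v v' hab' hac' hbc' ((ha' 8).2 rfl) ((hb' 8).2 rfl)
      ((hc' 8).2 (Or.inr rfl)) hq8 hv0 hv0' f0'.1 f0'.2.1 f0'.2.2 f3.1 f3.2.1 f3.2.2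
      f4.1 f4.2.1 f4.2.2 e3 e4
    subst huu hvv
    have huv : u ≠ v := by
      rintro rfl
      have := hℓ (h2 q u (ℓ 0) (ℓ 8) e1 hq0 hu0 hq8 hv0)
      omega
    exact hℓ (h2 u v _ _ huv hui hvi huj hvj)
  have fin : ∀ g : Fin 6 → Fin 9, Function.Injective g → ¬ ∀ i, I q (ℓ (g i)) := fun g hg =>
    h4 q (ℓ ∘ g) (hℓ.comp hg)
  have ex : ∃ e : Fin 9, ∀ i, 2 ≤ i → i ≤ 6 → i ≠ e → I q (ℓ i) := by
    by_contra hcon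
    push Not at hcon
    obtain ⟨i, hi, hi', -, hqi⟩ := hcon 0
    obtain ⟨j, hj, hj', hji, hqj⟩ := hcon i
    exact hji (two j i hj hj' hi hi' hqj hqi)
  obtain ⟨e, he⟩ := ex
  have hcase : e = 2 ∨ e = 3 ∨ e = 4 ∨ e = 5 ∨ (e ≠ 2 ∧ e ≠ 3 ∧ e ≠ 4 ∧ e ≠ 5) := by tauto
  rcases hcase with rfl | rfl | rfl | rfl | ⟨n2, n3, n4, n5⟩
  · refine fin ![0, 8, 3, 4, 5, 6] (by decide) ?_
    intro i; fin_cases i <;> first | exact hq0 | exact hq8 | exact he _ (by decide) (by decide) (by decide)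
  · refine fin ![0, 8, 2, 4, 5, 6] (by decide) ?_
    intro i; fin_cases i <;> first | exact hq0 | exact hq8 | exact he _ (by decide) (by decide) (by decide)
  · refine fin ![0, 8, 2, 3, 5, 6] (by decide) ?_
    intro i; fin_cases i <;> first | exact hq0 | exact hq8 | exact he _ (by decide) (by decide) (by decide)
  · refine fin ![0, 8, 2, 3, 4, 6] (by decide) ?_
    intro i; fin_cases i <;> first | exact hq0 | exact hq8 | exact he _ (by decide) (by decide) (by decide)
  · refine fin ![0, 8, 2, 3, 4, 5] (by decide) ?_
    intro i
    fin_cases i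
    · exact hq0
    · exact hq8
    · exact he 2 (by decide) (by decide) n2.symm
    · exact he 3 (by decide) (by decide) n3.symm
    · exact he 4 (by decide) (by decide) n4.symm
    · exact he 5 (by decide) (by decide) n5.symm

/-- A plane over `𝔽₄` has at most five pairwise non-proportional nonzero vectors. -/
lemma no_six {W : Type*} [AddCommGroup W] [Module F4 W] (hW : Module.finrank F4 W = 2)
    (w : Fin 6 → W) (h0 : ∀ i, w i ≠ 0) (h : ∀ i j, ∀ t : F4, t • w j = w i → i = j) : False := by
  have hcard : Nat.card (Projectivization F4 W) = 5 := by
    rw [Projectivization.card_of_finrank_two F4 W hW, GaloisField.card 2 2 (by norm_num)]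
    norm_num
  have : Finite (Projectivization F4 W) := Nat.finite_of_card_ne_zero (by omega)
  have hinj : Function.Injective (fun i => Projectivization.mk F4 (w i) (h0 i)) := by
    intro i j hij
    obtain ⟨t, ht⟩ := (Projectivization.mk_eq_mk_iff' F4 _ _ (h0 i) (h0 j)).1 hij
    exact h i j t ht
  have := Nat.card_le_card_of_injective _ hinj
  rw [hcard] at this
  simp at this

lemma ax_points (l : ProjLine) (w : Fin 6 → ProjPoint) (hw : Function.Injective w) :
    ¬ ∀ i, (w i).1 ≤ l.1 := by
  intro hl
  have hex : ∀ i, ∃ v : V3, v ≠ 0 ∧ (w i).1 = Submodule.span F4 {v} := by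
    intro i
    obtain ⟨⟨v, hv⟩, hv0, -⟩ := finrank_eq_one_iff'.1 (w i).2
    have hv0' : v ≠ 0 := fun h => hv0 (Subtype.ext h)
    refine ⟨v, hv0', ?_⟩
    refine (Submodule.eq_of_le_of_finrank_le ?_ ?_).symm
    · rwa [Submodule.span_singleton_le_iff_mem]
    · rw [(w i).2, finrank_span_singleton hv0']
  choose v hv0 hv using hex
  have hvl : ∀ i, v i ∈ l.1 := fun i => hl i (by rw [hv i]; exact Submodule.mem_span_singleton_self _)
  refine no_six l.2 (fun i => ⟨v i, hvl i⟩) (fun i h => hv0 i (congrArg Subtype.val h)) ?_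
  intro i j t ht
  have ht' : t • v j = v i := congrArg Subtype.val ht
  have ht0 : t ≠ 0 := by
    rintro rfl
    exact hv0 i (by rw [← ht', zero_smul])
  apply hw
  apply Subtype.ext
  rw [hv i, hv j, ← ht']
  exact Submodule.span_singleton_smul_eq (IsUnit.mk0 t ht0) _

lemma eq_of_two_points (p q : ProjPoint) (l m : ProjLine) (hpq : p ≠ q) (h1 : p.1 ≤ l.1)
    (h2 : q.1 ≤ l.1) (h3 : p.1 ≤ m.1) (h4 : q.1 ≤ m.1) : l = m := by
  by_contra hlm
  have hlt : l.1 ⊓ m.1 < l.1 := by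
    refine lt_of_le_of_ne inf_le_left fun h => hlm ?_
    apply Subtype.ext
    exact Submodule.eq_of_le_of_finrank_eq (inf_eq_left.1 h) (by rw [l.2, m.2])
  have hr := Submodule.finrank_lt_finrank_of_lt hlt
  rw [l.2] at hr
  apply hpq
  apply Subtype.ext
  have e1 := Submodule.eq_of_le_of_finrank_le (le_inf h1 h3) (by rw [p.2]; omega)
  have e2 := Submodule.eq_of_le_of_finrank_le (le_inf h2 h4) (by rw [q.2]; omega)
  rw [e1, e2]

lemma lines_meet (l m : ProjLine) (hlm : l ≠ m) : ∃ p : ProjPoint, p.1 ≤ l.1 ∧ p.1 ≤ m.1 := by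
  have h := Submodule.finrank_sup_add_finrank_inf_eq l.1 m.1
  have h3 := Submodule.finrank_le (l.1 ⊔ m.1)
  rw [Module.finrank_fin_fun] at h3
  have hlt : l.1 ⊓ m.1 < l.1 := by
    refine lt_of_le_of_ne inf_le_left fun h => hlm ?_
    apply Subtype.ext
    exact Submodule.eq_of_le_of_finrank_eq (inf_eq_left.1 h) (by rw [l.2, m.2])
  have hr := Submodule.finrank_lt_finrank_of_lt hlt
  have := l.2
  have := m.2
  exact ⟨⟨l.1 ⊓ m.1, by omega⟩, inf_le_left, inf_le_right⟩

lemma points_join (p q : ProjPoint) (hpq : p ≠ q) : ∃ l : ProjLine, p.1 ≤ l.1 ∧ q.1 ≤ l.1 := by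
  have h := Submodule.finrank_sup_add_finrank_inf_eq p.1 q.1
  have hlt : p.1 ⊓ q.1 < p.1 := by
    refine lt_of_le_of_ne inf_le_left fun h => hpq ?_
    apply Subtype.ext
    exact Submodule.eq_of_le_of_finrank_eq (inf_eq_left.1 h) (by rw [p.2, q.2])
  have hr := Submodule.finrank_lt_finrank_of_lt hlt
  have := p.2
  have := q.2
  exact ⟨⟨p.1 ⊔ q.1, by omega⟩, le_sup_left, le_sup_right⟩

lemma ax_lines (p : ProjPoint) (w : Fin 6 → ProjLine) (hw : Function.Injective w) :
    ¬ ∀ i, p.1 ≤ (w i).1 := by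
  intro hl
  have hex : ∀ i, ∃ v : V3, v ∈ (w i).1 ∧ v ∉ p.1 := by
    intro i
    by_contra hcon
    push Not at hcon
    have := Submodule.finrank_mono (show (w i).1 ≤ p.1 from hcon)
    rw [p.2, (w i).2] at this
    omega
  choose v hv hvp using hex
  have hW : Module.finrank F4 (V3 ⧸ p.1) = 2 := by
    have := Submodule.finrank_quotient_add_finrank p.1
    rw [p.2, Module.finrank_fin_fun] at this
    omega
  refine no_six hW (fun i => p.1.mkQ (v i)) (fun i h => hvp i (by simpa using h)) ?_
  intro i j t ht
  rw [← map_smul, ← sub_eq_zero, ← map_sub] at ht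
  have hmem : t • v j - v i ∈ p.1 := (Submodule.Quotient.mk_eq_zero p.1).1 ht
  have hij : v i ∈ (w j).1 := by
    have := (w j).1.sub_mem ((w j).1.smul_mem t (hv j)) (hl j hmem)
    simpa using this
  by_contra hne
  have hlm : w i ≠ w j := fun h => hne (hw h)
  have hlt : (w i).1 ⊓ (w j).1 < (w i).1 := by
    refine lt_of_le_of_ne inf_le_left fun h => hlm ?_
    apply Subtype.ext
    exact Submodule.eq_of_le_of_finrank_eq (inf_eq_left.1 h) (by rw [(w i).2, (w j).2])
  have hr := Submodule.finrank_lt_finrank_of_lt hlt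
  rw [(w i).2] at hr
  have e1 := Submodule.eq_of_le_of_finrank_le (le_inf (hl i) (hl j)) (by rw [p.2]; omega)
  exact hvp i (by rw [e1]; exact ⟨hv i, hij⟩)

/-- The vertices `2, 4, …, 18` of the spine. -/
def spine (i : Fin 9) : Fin 21 := ⟨2 * i.1 + 2, by omega⟩

lemma spine_injective : Function.Injective spine := by decide

instance (n a b : ℕ) : Decidable (DTAdj n a b) := by unfold DTAdj; infer_instance

instance (n : ℕ) : DecidableRel (DTilde n).Adj := fun a b =>
  inferInstanceAs (Decidable (a ≠ b ∧ (DTAdj n a.1 b.1 ∨ DTAdj n b.1 a.1)))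

lemma not_isLeft_iff {x y : ProjPoint ⊕ ProjLine} (h : IncGraph.Adj x y) :
    x.isLeft = !y.isLeft := by
  rcases x with p | l <;> rcases y with q | m
  · exact h.elim
  · rfl
  · rfl
  · exact h.elim

/-- The incidence graph of `ℙ²(𝔽₄)` contains no induced subgraph isomorphic to `D̃₂₀`. -/
theorem no_induced_DTilde_20 : ¬ HasInducedCopy (DTilde 20) IncGraph := by
  rintro ⟨f, hf, hadj⟩
  have step : ∀ a b : Fin 21, (DTilde 20).Adj a b → (f a).isLeft = !(f b).isLeft :=
    fun a b h => not_isLeft_iff ((hadj a b).2 h)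
  have two : ∀ a b c : Fin 21, (DTilde 20).Adj a b → (DTilde 20).Adj b c →
      (f a).isLeft = (f c).isLeft := by
    intro a b c h h'
    rw [step a b h, step b c h', Bool.not_not]
  have s0 : ∀ i, (f (spine i)).isLeft = (f 2).isLeft := by
    have e1 := two 2 3 4 (by decide) (by decide)
    have e2 := two 4 5 6 (by decide) (by decide)
    have e3 := two 6 7 8 (by decide) (by decide)
    have e4 := two 8 9 10 (by decide) (by decide)
    have e5 := two 10 11 12 (by decide) (by decide)
    have e6 := two 12 13 14 (by decide) (by decide)
    have e7 := two 14 15 16 (by decide) (by decide)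
    have e8 := two 16 17 18 (by decide) (by decide)
    intro i
    fin_cases i <;> simp only [spine] <;> simp_all
  have leaf : ∀ (a : Fin 21) (i : Fin 9), (DTilde 20).Adj a (spine i) →
      (f a).isLeft = !(f 2).isLeft := by
    intro a i h
    rw [step a _ h, s0 i]
  have l0 := leaf 0 0 (by decide)
  have l1 := leaf 1 0 (by decide)
  have l3 := leaf 3 0 (by decide)
  have l17 := leaf 17 8 (by decide)
  have l19 := leaf 19 8 (by decide)
  have l20 := leaf 20 8 (by decide)
  have d0 : ∀ i, (DTilde 20).Adj 0 (spine i) ↔ i = 0 := by decide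
  have d1 : ∀ i, (DTilde 20).Adj 1 (spine i) ↔ i = 0 := by decide
  have d3 : ∀ i, (DTilde 20).Adj 3 (spine i) ↔ i = 0 ∨ i = 1 := by decide
  have d19 : ∀ i, (DTilde 20).Adj 19 (spine i) ↔ i = 8 := by decide
  have d20 : ∀ i, (DTilde 20).Adj 20 (spine i) ↔ i = 8 := by decide
  have d17 : ∀ i, (DTilde 20).Adj 17 (spine i) ↔ i = 7 ∨ i = 8 := by decide
  have neq : ∀ {a b : Fin 21}, a ≠ b → f a ≠ f b := fun h h' => h (hf h')
  cases h : (f 2).isLeft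
  · -- the spine vertices are lines
    rw [h] at s0 l0 l1 l3 l17 l19 l20
    have hr : ∀ i, ∃ l, f (spine i) = Sum.inr l := fun i =>
      Sum.isRight_iff.1 (by simpa using s0 i)
    choose ℓ hℓ using hr
    obtain ⟨a, ea⟩ := Sum.isLeft_iff.1 (by simpa using l0)
    obtain ⟨b, eb⟩ := Sum.isLeft_iff.1 (by simpa using l1)
    obtain ⟨c, ec⟩ := Sum.isLeft_iff.1 (by simpa using l3)
    obtain ⟨a', ea'⟩ := Sum.isLeft_iff.1 (by simpa using l19)
    obtain ⟨b', eb'⟩ := Sum.isLeft_iff.1 (by simpa using l20)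
    obtain ⟨c', ec'⟩ := Sum.isLeft_iff.1 (by simpa using l17)
    have tr : ∀ (k : Fin 21) (p : ProjPoint), f k = Sum.inl p → ∀ i,
        (p.1 ≤ (ℓ i).1 ↔ (DTilde 20).Adj k (spine i)) := by
      intro k p hk i
      rw [← hadj, hk, hℓ]
      rfl
    have ne : ∀ (k k' : Fin 21) (p p' : ProjPoint), f k = Sum.inl p → f k' = Sum.inl p' →
        k ≠ k' → p ≠ p' := by
      rintro k k' p _ hk hk' hne rfl
      exact neq hne (hk.trans hk'.symm)
    refine core_config (fun (p : ProjPoint) (l : ProjLine) => p.1 ≤ l.1) lines_meet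
      eq_of_two_points ax_points ax_lines ℓ ?_ a b c a' b' c'
      (ne _ _ _ _ ea eb (by decide)) (ne _ _ _ _ ea ec (by decide)) (ne _ _ _ _ eb ec (by decide))
      (ne _ _ _ _ ea' eb' (by decide)) (ne _ _ _ _ ea' ec' (by decide))
      (ne _ _ _ _ eb' ec' (by decide))
      (fun i => (tr _ _ ea i).trans (d0 i)) (fun i => (tr _ _ eb i).trans (d1 i))
      (fun i => (tr _ _ ec i).trans (d3 i)) (fun i => (tr _ _ ea' i).trans (d19 i))
      (fun i => (tr _ _ eb' i).trans (d20 i)) (fun i => (tr _ _ ec' i).trans (d17 i))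
    intro i j hij
    exact spine_injective (hf (by rw [hℓ, hℓ, hij]))
  · -- the spine vertices are points
    rw [h] at s0 l0 l1 l3 l17 l19 l20
    have hr : ∀ i, ∃ l, f (spine i) = Sum.inl l := fun i =>
      Sum.isLeft_iff.1 (by simpa using s0 i)
    choose ℓ hℓ using hr
    obtain ⟨a, ea⟩ := Sum.isRight_iff.1 (by simpa using l0)
    obtain ⟨b, eb⟩ := Sum.isRight_iff.1 (by simpa using l1)
    obtain ⟨c, ec⟩ := Sum.isRight_iff.1 (by simpa using l3)
    obtain ⟨a', ea'⟩ := Sum.isRight_iff.1 (by simpa using l19)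
    obtain ⟨b', eb'⟩ := Sum.isRight_iff.1 (by simpa using l20)
    obtain ⟨c', ec'⟩ := Sum.isRight_iff.1 (by simpa using l17)
    have tr : ∀ (k : Fin 21) (p : ProjLine), f k = Sum.inr p → ∀ i,
        ((ℓ i).1 ≤ p.1 ↔ (DTilde 20).Adj k (spine i)) := by
      intro k p hk i
      rw [← hadj, hk, hℓ]
      rfl
    have ne : ∀ (k k' : Fin 21) (p p' : ProjLine), f k = Sum.inr p → f k' = Sum.inr p' →
        k ≠ k' → p ≠ p' := by
      rintro k k' p _ hk hk' hne rfl
      exact neq hne (hk.trans hk'.symm)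
    refine core_config (fun (l : ProjLine) (p : ProjPoint) => p.1 ≤ l.1) points_join
      ?_ ax_lines ax_points ℓ ?_ a b c a' b' c'
      (ne _ _ _ _ ea eb (by decide)) (ne _ _ _ _ ea ec (by decide)) (ne _ _ _ _ eb ec (by decide))
      (ne _ _ _ _ ea' eb' (by decide)) (ne _ _ _ _ ea' ec' (by decide))
      (ne _ _ _ _ eb' ec' (by decide))
      (fun i => (tr _ _ ea i).trans (d0 i)) (fun i => (tr _ _ eb i).trans (d1 i))
      (fun i => (tr _ _ ec i).trans (d3 i)) (fun i => (tr _ _ ea' i).trans (d19 i))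
      (fun i => (tr _ _ eb' i).trans (d20 i)) (fun i => (tr _ _ ec' i).trans (d17 i))
    · intro l m p q hlm h1 h2 h3 h4
      by_contra hpq
      exact hlm (eq_of_two_points p q l m hpq h1 h3 h2 h4)
    · intro i j hij
      exact spine_injective (hf (by rw [hℓ, hℓ, hij]))
end

section
/- For every odd integer m ≥ 9, the incidence graph of points and lines of ℙ²(𝔽₄) contains no induced subgraph isomorphic to the extended Dynkin diagram D̃ₘ. -/
/-- A line of `ℙ²(𝔽₄)` has at most five points. -/
lemma no_six_points (L : Submodule F4 V3) (hL : Module.finrank F4 L = 2)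
    (g : Fin 6 → Submodule F4 V3) (hg : Function.Injective g)
    (h1 : ∀ i, Module.finrank F4 (g i) = 1) (hle : ∀ i, g i ≤ L) : False := by
  classical
  have hF : Nat.card F4 = 4 := by
    have := GaloisField.card 2 2 (by norm_num)
    simpa using this
  have hu : Nat.card F4ˣ = 3 := by
    have : Finite F4 := Nat.finite_of_card_ne_zero (by omega)
    rw [Nat.card_units, hF]
  have hLc : Nat.card L = 16 := by
    rw [Module.natCard_eq_pow_finrank (K := F4), hL, hF]
    norm_num
  have hv : ∀ i, ∃ v : V3, v ≠ 0 ∧ F4 ∙ v = g i := by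
    intro i
    obtain ⟨v, hv, hv0, hs⟩ := finrank_eq_one_iff'.mp (h1 i) |>.imp fun v h => (⟨v.2, h.1, h.2⟩ : _ ∧ _ ∧ _)
    refine ⟨v, by simpa using hv0, ?_⟩
    apply le_antisymm
    · simp [Submodule.span_singleton_le_iff_mem]
    · intro w hw
      obtain ⟨c, hc⟩ := hs ⟨w, hw⟩
      exact Submodule.mem_span_singleton.mpr ⟨c, by simpa using congrArg Subtype.val hc⟩
  choose v hv0 hvs using hv
  have hmem : ∀ i, v i ∈ L := fun i => hle i (hvs i ▸ Submodule.mem_span_singleton_self _)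
  let φ : Fin 6 × F4ˣ → L := fun x => ⟨(x.2 : F4) • v x.1, L.smul_mem _ (hmem _)⟩
  have hφ : Function.Injective φ := by
    rintro ⟨i, c⟩ ⟨j, d⟩ h
    have h' : (c : F4) • v i = (d : F4) • v j := congrArg Subtype.val h
    have hij : i = j := by
      apply hg
      rw [← hvs i, ← hvs j, ← Submodule.span_singleton_smul_eq c.isUnit (v i), h',
        Submodule.span_singleton_smul_eq d.isUnit]
    subst hij
    have := smul_left_injective F4 (hv0 i) h'
    rw [Units.ext this]
  have hfin : Finite L := Nat.finite_of_card_ne_zero (by omega)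
  have := Nat.card_le_card_of_injective φ hφ
  rw [Nat.card_prod, hu, hLc, Nat.card_fin] at this
  omega

/-- Three lines through `P` and three points on `L` off these lines cannot coexist if `P ∉ L`. -/
lemma no_config (P L : Submodule F4 V3) (hP : Module.finrank F4 P = 1)
    (hL : Module.finrank F4 L = 2) (hPL : ¬ P ≤ L)
    (a : Fin 3 → Submodule F4 V3) (ha : Function.Injective a)
    (ha2 : ∀ i, Module.finrank F4 (a i) = 2) (hPa : ∀ i, P ≤ a i)
    (q : Fin 3 → Submodule F4 V3) (hq : Function.Injective q)
    (hq1 : ∀ i, Module.finrank F4 (q i) = 1) (hqL : ∀ i, q i ≤ L)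
    (hqa : ∀ i j, ¬ q i ≤ a j) : False := by
  have meet : ∀ A B : Submodule F4 V3, Module.finrank F4 A = 2 → Module.finrank F4 B = 2 →
      A ≠ B → Module.finrank F4 (A ⊓ B : Submodule F4 V3) = 1 := by
    intro A B hA hB hAB
    have h := Submodule.finrank_sup_add_finrank_inf_eq A B
    have h3 : Module.finrank F4 (A ⊔ B : Submodule F4 V3) ≤ 3 := by
      simpa using Submodule.finrank_le (A ⊔ B)
    have hlt : A ⊓ B < A := by
      refine lt_of_le_of_ne inf_le_left fun he => hAB ?_
      exact Submodule.eq_of_le_of_finrank_eq (inf_eq_left.mp he) (hA.trans hB.symm)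
    have := Submodule.finrank_lt_finrank_of_lt hlt
    omega
  have haL : ∀ i, a i ≠ L := fun i h => hPL (h ▸ hPa i)
  have hx := fun i => meet (a i) L (ha2 i) hL (haL i)
  refine no_six_points L hL (fun k => Sum.elim (fun i => a i ⊓ L) q (finSumFinEquiv.symm k))
    (Function.Injective.comp ?_ (finSumFinEquiv (m := 3) (n := 3)).symm.injective) ?_ ?_
  · refine Function.Injective.sumElim ?_ hq ?_
    · intro i j hij
      by_contra hne
      have hij : a i ⊓ L = a j ⊓ L := hij
      have h1 := meet (a i) (a j) (ha2 i) (ha2 j) (fun h => hne (ha h))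
      have e1 : P = a i ⊓ a j := Submodule.eq_of_le_of_finrank_eq (le_inf (hPa i) (hPa j))
        (hP.trans h1.symm)
      have e2 : a i ⊓ L = a i ⊓ a j := Submodule.eq_of_le_of_finrank_eq
        (le_inf inf_le_left (hij.le.trans inf_le_left)) ((hx i).trans h1.symm)
      exact hPL ((e1.trans e2.symm).le.trans inf_le_right)
    · intro i j h
      exact hqa j i (h.symm.le.trans inf_le_left)
  · intro k
    rcases (finSumFinEquiv (m := 3) (n := 3)).symm k with i | i
    · exact hx i
    · exact hq1 i
  · intro k
    rcases (finSumFinEquiv (m := 3) (n := 3)).symm k with i | i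
    · exact inf_le_right
    · exact hqL i

lemma IncAdj.isLeft_ne {x y : ProjPoint ⊕ ProjLine} (h : IncAdj x y) :
    x.isLeft = !y.isLeft := by
  rcases x with x | x <;> rcases y with y | y <;> first | rfl | exact h.elim

/-- Vertices at even distance on the central path have the same type. -/
lemma isLeft_path (m : ℕ) (g : ℕ → ProjPoint ⊕ ProjLine)
    (hadj : ∀ a b, a ≤ m → b ≤ m → (IncAdj (g a) (g b) ↔
      a ≠ b ∧ (DTAdj m a b ∨ DTAdj m b a))) (j : ℕ) (hj : 2 * j + 5 ≤ m) :
    (g (2 * j + 2)).isLeft = (g 2).isLeft := by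
  induction j with
  | zero => rfl
  | succ j ih =>
    have h1 := ((hadj (2 * j + 2) (2 * j + 3) (by omega) (by omega)).2
      (by unfold DTAdj; omega)).isLeft_ne
    have h2 := ((hadj (2 * j + 3) (2 * j + 4) (by omega) (by omega)).2
      (by unfold DTAdj; omega)).isLeft_ne
    rw [← ih (by omega), show 2 * (j + 1) + 2 = 2 * j + 4 by ring, h1, h2]
    simp

lemma DTAdj_rev (m a b : ℕ) (hm : 9 ≤ m) (ha : a ≤ m) (hb : b ≤ m) (h : DTAdj m a b) :
    DTAdj m (m - b) (m - a) := by
  unfold DTAdj at *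
  rcases h with h | h | h | h | h
  · right; right; right; right; omega
  · right; right; right; left; omega
  · right; right; left; omega
  · right; left; omega
  · left; omega

lemma core (m : ℕ) (hm : 9 ≤ m) (hodd : Odd m) (g : ℕ → ProjPoint ⊕ ProjLine)
    (hinj : ∀ a b, a ≤ m → b ≤ m → g a = g b → a = b)
    (hadj : ∀ a b, a ≤ m → b ≤ m → (IncAdj (g a) (g b) ↔
      a ≠ b ∧ (DTAdj m a b ∨ DTAdj m b a))) (h2 : (g 2).isLeft = true) : False := by
  obtain ⟨k, rfl⟩ := hodd
  set m := 2 * k + 1 with hmk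
  have A : ∀ a b, a ≤ m → b ≤ m → a ≠ b → (DTAdj m a b ∨ DTAdj m b a) → IncAdj (g a) (g b) :=
    fun a b ha hb hn h => (hadj a b ha hb).2 ⟨hn, h⟩
  have N : ∀ a b, a ≤ m → b ≤ m → ¬ (DTAdj m a b ∨ DTAdj m b a) → ¬ IncAdj (g a) (g b) :=
    fun a b ha hb h h' => h ((hadj a b ha hb).1 h').2
  have h3l : (g (m - 3)).isLeft = true := by
    have := isLeft_path m g hadj (k - 2) (by omega)
    rw [show m - 3 = 2 * (k - 2) + 2 by omega, this, h2]
  have a0 := A 2 0 (by omega) (by omega) (by omega) (by unfold DTAdj; omega)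
  have a1 := A 2 1 (by omega) (by omega) (by omega) (by unfold DTAdj; omega)
  have a3 := A 2 3 (by omega) (by omega) (by omega) (by unfold DTAdj; omega)
  have b0 := A (m - 3) (m - 2) (by omega) (by omega) (by omega) (by unfold DTAdj; omega)
  have b1 := A (m - 1) (m - 2) (by omega) (by omega) (by omega) (by unfold DTAdj; omega)
  have b2 := A m (m - 2) (by omega) (by omega) (by omega) (by unfold DTAdj; omega)
  have c := N 2 (m - 2) (by omega) (by omega) (by unfold DTAdj; omega)
  have n00 := N (m - 3) 0 (by omega) (by omega) (by unfold DTAdj; omega)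
  have n01 := N (m - 3) 1 (by omega) (by omega) (by unfold DTAdj; omega)
  have n03 := N (m - 3) 3 (by omega) (by omega) (by unfold DTAdj; omega)
  have n10 := N (m - 1) 0 (by omega) (by omega) (by unfold DTAdj; omega)
  have n11 := N (m - 1) 1 (by omega) (by omega) (by unfold DTAdj; omega)
  have n13 := N (m - 1) 3 (by omega) (by omega) (by unfold DTAdj; omega)
  have n20 := N m 0 (by omega) (by omega) (by unfold DTAdj; omega)
  have n21 := N m 1 (by omega) (by omega) (by unfold DTAdj; omega)
  have n23 := N m 3 (by omega) (by omega) (by unfold DTAdj; omega)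
  have i01 : g 0 ≠ g 1 := fun h => by have := hinj _ _ (by omega) (by omega) h; omega
  have i03 : g 0 ≠ g 3 := fun h => by have := hinj _ _ (by omega) (by omega) h; omega
  have i13 : g 1 ≠ g 3 := fun h => by have := hinj _ _ (by omega) (by omega) h; omega
  have j01 : g (m - 3) ≠ g (m - 1) := fun h => by
    have := hinj _ _ (by omega) (by omega) h; omega
  have j02 : g (m - 3) ≠ g m := fun h => by have := hinj _ _ (by omega) (by omega) h; omega
  have j12 : g (m - 1) ≠ g m := fun h => by have := hinj _ _ (by omega) (by omega) h; omega
  clear A N hadj hinj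
  generalize g 0 = x0 at *
  generalize g 1 = x1 at *
  generalize g 2 = x2 at *
  generalize g 3 = x3 at *
  generalize g (m - 3) = y0 at *
  generalize g (m - 2) = L at *
  generalize g (m - 1) = y1 at *
  generalize g m = y2 at *
  rcases x2 with P | P
  swap
  · simp at h2
  rcases y0 with y0 | y0
  swap
  · simp at h3l
  rcases x0 with x0 | x0
  · exact a0.elim
  rcases x1 with x1 | x1
  · exact a1.elim
  rcases x3 with x3 | x3
  · exact a3.elim
  rcases L with L | L
  · exact b0.elim
  rcases y1 with y1 | y1
  swap
  · exact b1.elim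
  rcases y2 with y2 | y2
  swap
  · exact b2.elim
  simp only [IncAdj] at *
  have I : ∀ {T : Type} (u : Fin 3 → T), u 0 ≠ u 1 → u 0 ≠ u 2 → u 1 ≠ u 2 →
      Function.Injective u := by
    intro T u h1 h2 h3 i j hij
    fin_cases i <;> fin_cases j <;> simp_all
  refine no_config P.1 L.1 P.2 L.2 c ![x0.1, x1.1, x3.1] (I _ ?_ ?_ ?_) ?_ ?_
    ![y0.1, y1.1, y2.1] (I _ ?_ ?_ ?_) ?_ ?_ ?_
  · exact fun h => i01 (congrArg Sum.inr (Subtype.ext h))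
  · exact fun h => i03 (congrArg Sum.inr (Subtype.ext h))
  · exact fun h => i13 (congrArg Sum.inr (Subtype.ext h))
  · intro i; fin_cases i <;> [exact x0.2; exact x1.2; exact x3.2]
  · intro i; fin_cases i <;> assumption
  · exact fun h => j01 (congrArg Sum.inl (Subtype.ext h))
  · exact fun h => j02 (congrArg Sum.inl (Subtype.ext h))
  · exact fun h => j12 (congrArg Sum.inl (Subtype.ext h))
  · intro i; fin_cases i <;> [exact y0.2; exact y1.2; exact y2.2]
  · intro i; fin_cases i <;> assumption
  · intro i j; fin_cases i <;> fin_cases j <;> assumption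

/-- For every odd integer `m ≥ 9`, the incidence graph of `ℙ²(𝔽₄)` contains no induced
subgraph isomorphic to `D̃ₘ`. -/
theorem no_induced_DTilde_odd (m : ℕ) (hm : 9 ≤ m) (hodd : Odd m) :
    ¬ HasInducedCopy (DTilde m) IncGraph := by
  rintro ⟨f, hf, hadj⟩
  let g : ℕ → ProjPoint ⊕ ProjLine := fun k => f (Fin.ofNat (m + 1) k)
  have val : ∀ a, a ≤ m → (Fin.ofNat (m + 1) a).1 = a := fun a ha =>
    Nat.mod_eq_of_lt (by omega)
  have ginj : ∀ a b, a ≤ m → b ≤ m → g a = g b → a = b := by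
    intro a b ha hb h
    have := congrArg Fin.val (hf h)
    rwa [val a ha, val b hb] at this
  have gadj : ∀ a b, a ≤ m → b ≤ m → (IncAdj (g a) (g b) ↔
      a ≠ b ∧ (DTAdj m a b ∨ DTAdj m b a)) := by
    intro a b ha hb
    refine (hadj (Fin.ofNat (m + 1) a) (Fin.ofNat (m + 1) b)).trans ?_
    simp only [DTilde, ne_eq, Fin.ext_iff, val a ha, val b hb]
  by_cases h2 : (g 2).isLeft = true
  · exact core m hm hodd g ginj gadj h2
  · refine core m hm hodd (fun k => g (m - k)) ?_ ?_ ?_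
    · intro a b ha hb h
      have := ginj _ _ (by omega) (by omega) h
      omega
    · intro a b ha hb
      refine (gadj (m - a) (m - b) (by omega) (by omega)).trans ?_
      have e1 : m - (m - a) = a := by omega
      have e2 : m - (m - b) = b := by omega
      have r1 := DTAdj_rev m a b hm ha hb
      have r2 := DTAdj_rev m b a hm hb ha
      have r3 := DTAdj_rev m (m - a) (m - b) hm (by omega) (by omega)
      have r4 := DTAdj_rev m (m - b) (m - a) hm (by omega) (by omega)
      rw [e1, e2] at r3 r4
      have hne : m - a ≠ m - b ↔ a ≠ b := by omega
      rw [hne]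
      tauto
    · obtain ⟨k, hk⟩ := hodd
      have h := isLeft_path m g gadj (k - 2) (by omega)
      rw [show 2 * (k - 2) + 2 = m - 3 by omega] at h
      have h' := ((gadj (m - 2) (m - 3) (by omega) (by omega)).2
        (by unfold DTAdj; omega)).isLeft_ne
      show (g (m - 2)).isLeft = true
      rw [h', h]
      simpa using h2
end

section
/- For every m ∈ {4, 5, 6, 7, 8, 10, 12, 16}, the incidence graph of points and lines of ℙ²(𝔽₄) contains an induced subgraph isomorphic to the extended Dynkin diagram D̃ₘ. -/
/-- Codes for the elements of the field: `(a, b)` stands for `a + b ω`. -/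
abbrev C4 : Type := Bool × Bool

def C4.plus (x y : C4) : C4 := (xor x.1 y.1, xor x.2 y.2)

def C4.times (x y : C4) : C4 :=
  (xor (x.1 && y.1) (x.2 && y.2), xor (xor (x.1 && y.2) (x.2 && y.1)) (x.2 && y.2))

/-- Codes for vectors. -/
abbrev CV : Type := C4 × C4 × C4

def CV.dot (u v : CV) : C4 :=
  C4.plus (C4.plus (C4.times u.1 v.1) (C4.times u.2.1 v.2.1)) (C4.times u.2.2 v.2.2)

theorem exists_omega : ∃ w : F4, w ^ 2 + w + 1 = 0 := by
  classical
  have hfin : Finite F4 := inferInstance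
  let _ : Fintype F4 := Fintype.ofFinite F4
  have hc : Fintype.card F4 = 4 := by
    rw [← Nat.card_eq_fintype_card, GaloisField.card 2 2 (by norm_num)]; norm_num
  have : ∃ x : F4, x ∉ ({0, 1} : Finset F4) := by
    by_contra! h
    have h1 : (Finset.univ : Finset F4).card ≤ ({0, 1} : Finset F4).card :=
      Finset.card_le_card (fun x _ => h x)
    have h2 : ({0, 1} : Finset F4).card ≤ 2 := Finset.card_le_two
    rw [Finset.card_univ, hc] at h1
    omega
  obtain ⟨x, hx⟩ := this
  simp only [Finset.mem_insert, Finset.mem_singleton, not_or] at hx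
  refine ⟨x, ?_⟩
  have h4 : x ^ 4 = x := by
    have := FiniteField.pow_card x
    rwa [hc] at this
  have h5 : x * ((x - 1) * (x ^ 2 + x + 1)) = 0 := by linear_combination h4
  rcases mul_eq_zero.1 h5 with h | h
  · exact absurd h hx.1
  rcases mul_eq_zero.1 h with h | h
  · exact absurd (sub_eq_zero.1 h) hx.2
  · exact h

noncomputable def om : F4 := exists_omega.choose

theorem om_spec : om ^ 2 + om + 1 = 0 := exists_omega.choose_spec

theorem two_F4 : (2 : F4) = 0 := by
  have := CharP.cast_eq_zero F4 2
  exact_mod_cast this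

noncomputable def bt (b : Bool) : F4 := if b then 1 else 0

theorem bt_xor (a b : Bool) : bt (xor a b) = bt a + bt b := by
  cases a <;> cases b <;> simp [bt]
  linear_combination -two_F4

theorem bt_and (a b : Bool) : bt (a && b) = bt a * bt b := by
  cases a <;> cases b <;> simp [bt]

/-- Decoding of field elements. -/
noncomputable def dec (x : C4) : F4 := bt x.1 + bt x.2 * om

theorem dec_plus (x y : C4) : dec (C4.plus x y) = dec x + dec y := by
  simp only [dec, C4.plus, bt_xor]; ring

theorem dec_times (x y : C4) : dec (C4.times x y) = dec x * dec y := by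
  simp only [dec, C4.times, bt_xor, bt_and]
  linear_combination (-bt x.2 * bt y.2) * om_spec + bt x.2 * bt y.2 * (1 + om) * two_F4

theorem dec_eq_zero (x : C4) : dec x = 0 ↔ x = (false, false) := by
  have h0 : om ≠ 0 := by
    intro h; have := om_spec; simp [h] at this
  have h1 : 1 + om ≠ 0 := by
    intro h
    have h2 : (1 : F4) = 0 := by linear_combination om_spec - om * h
    exact one_ne_zero h2
  rcases x with ⟨_ | _, _ | _⟩ <;> simp [dec, bt, h0, h1]

/-- Decoding of vectors. -/
noncomputable def decV (u : CV) : V3 := ![dec u.1, dec u.2.1, dec u.2.2]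

theorem decV_ne (u : CV) (hu : u ≠ ((false, false), (false, false), (false, false))) :
    decV u ≠ 0 := by
  intro h
  apply hu
  have h0 := congrFun h 0
  have h1 := congrFun h 1
  have h2 := congrFun h 2
  simp only [decV, Matrix.cons_val, Pi.zero_apply, dec_eq_zero] at h0 h1 h2
  ext1
  · exact h0
  · ext1
    · exact h1
    · exact h2

/-- The linear functional with given coefficients. -/
noncomputable def fn (l : V3) : V3 →ₗ[F4] F4 := dotProductBilin F4 F4 l

theorem fn_apply (l x : V3) : fn l x = l ⬝ᵥ x := rfl

theorem fn_dec (l x : CV) : fn (decV l) (decV x) = dec (CV.dot l x) := by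
  simp [fn_apply, decV, CV.dot, dec_plus, dec_times, dotProduct, Fin.sum_univ_three]

theorem finrank_ker_fn (l : V3) (hl : l ≠ 0) :
    Module.finrank F4 (LinearMap.ker (fn l)) = 2 := by
  have h := LinearMap.finrank_range_add_finrank_ker (fn l)
  have hne : fn l ≠ 0 := by
    intro h0
    apply hl
    ext i
    have := LinearMap.congr_fun h0 (Pi.single i 1)
    simpa [fn_apply] using this
  rw [LinearMap.range_eq_top.2 (LinearMap.surjective hne), finrank_top] at h
  simp at h
  omega

abbrev CZ : CV := ((false, false), (false, false), (false, false))

/-- The vertex attached to a type (`false` for points) and a nonzero vector. -/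
noncomputable def vert (t : Bool) (u : CV) (hu : u ≠ CZ) : ProjPoint ⊕ ProjLine :=
  if t then Sum.inr ⟨LinearMap.ker (fn (decV u)), finrank_ker_fn _ (decV_ne u hu)⟩
  else Sum.inl ⟨Submodule.span F4 {decV u}, finrank_span_singleton (decV_ne u hu)⟩

theorem inc_iff (u v : CV) :
    Submodule.span F4 {decV u} ≤ LinearMap.ker (fn (decV v)) ↔
      CV.dot v u = (false, false) := by
  rw [Submodule.span_singleton_le_iff_mem, LinearMap.mem_ker, fn_dec, dec_eq_zero]

/-- Adjacency on codes. -/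
def cadj (s : Bool) (u : CV) (t : Bool) (v : CV) : Prop :=
  s ≠ t ∧ CV.dot u v = (false, false)

instance (s : Bool) (u : CV) (t : Bool) (v : CV) : Decidable (cadj s u t v) := by
  unfold cadj; infer_instance

theorem dot_comm' (u v : CV) : CV.dot u v = CV.dot v u := by
  simp only [CV.dot, C4.plus, C4.times, Bool.and_comm, Bool.xor_comm, Bool.xor_left_comm]

theorem adj_vert (s : Bool) (u : CV) (hu : u ≠ CZ) (t : Bool) (v : CV) (hv : v ≠ CZ) :
    IncGraph.Adj (vert s u hu) (vert t v hv) ↔ cadj s u t v := by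
  cases s <;> cases t <;> simp only [vert, IncGraph, IncAdj, cadj]
  · simp
  · simpa [dot_comm' u v] using inc_iff u v
  · simpa using inc_iff v u
  · simp

/-- Decoding of a number below 128 to a type and a vector. -/
def typ (n : ℕ) : Bool := n.testBit 6

def vec (n : ℕ) : CV :=
  ((n.testBit 4, n.testBit 5), (n.testBit 2, n.testBit 3), (n.testBit 0, n.testBit 1))

/-- A coded list describes an induced copy. -/
theorem copy_of_code (m : ℕ) (c : List ℕ)
    (h0 : ∀ i : Fin (m + 1), vec (c.getD i 0) ≠ CZ)
    (h1 : ∀ i j : Fin (m + 1), cadj (typ (c.getD i 0)) (vec (c.getD i 0))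
      (typ (c.getD j 0)) (vec (c.getD j 0)) ↔ (i ≠ j ∧ (DTAdj m i.1 j.1 ∨ DTAdj m j.1 i.1)))
    (h2 : ∀ i j : Fin (m + 1), i ≠ j → ∃ k : Fin 128, vec k ≠ CZ ∧
      ¬ (cadj (typ (c.getD i 0)) (vec (c.getD i 0)) (typ k) (vec k) ↔
        cadj (typ (c.getD j 0)) (vec (c.getD j 0)) (typ k) (vec k))) :
    HasInducedCopy (DTilde m) IncGraph := by
  refine ⟨fun i => vert (typ (c.getD i 0)) (vec (c.getD i 0)) (h0 i), ?_, ?_⟩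
  · intro i j hij
    by_contra hne
    obtain ⟨k, hk, hk2⟩ := h2 i j hne
    apply hk2
    rw [← adj_vert _ _ (h0 i) _ _ hk, ← adj_vert _ _ (h0 j) _ _ hk]
    simp only at hij
    rw [hij]
  · intro i j
    rw [adj_vert, h1]
    rfl

/-- For every `m ∈ {4, 5, 6, 7, 8, 10, 12, 16}`, the incidence graph of `ℙ²(𝔽₄)`
contains an induced subgraph isomorphic to `D̃ₘ`. -/
theorem exists_induced_DTilde :
    ∀ m ∈ ({4, 5, 6, 7, 8, 10, 12, 16} : Set ℕ), HasInducedCopy (DTilde m) IncGraph := by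
  intro m hm
  simp only [Set.mem_insert_iff, Set.mem_singleton_iff] at hm
  rcases hm with rfl | rfl | rfl | rfl | rfl | rfl | rfl | rfl
  · exact copy_of_code _ [16, 17, 68, 18, 19]
      (by decide +kernel) (by decide +kernel) (by decide +kernel)
  · exact copy_of_code _ [16, 17, 68, 18, 83, 87]
      (by decide +kernel) (by decide +kernel) (by decide +kernel)
  · exact copy_of_code _ [16, 17, 68, 18, 83, 22, 26]
      (by decide +kernel) (by decide +kernel) (by decide +kernel)
  · exact copy_of_code _ [16, 17, 68, 18, 83, 22, 84, 90]
      (by decide +kernel) (by decide +kernel) (by decide +kernel)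
  · exact copy_of_code _ [16, 17, 68, 18, 83, 22, 84, 20, 21]
      (by decide +kernel) (by decide +kernel) (by decide +kernel)
  · exact copy_of_code _ [16, 17, 68, 18, 83, 22, 84, 20, 86, 29, 7]
      (by decide +kernel) (by decide +kernel) (by decide +kernel)
  · exact copy_of_code _ [16, 17, 68, 18, 83, 22, 84, 20, 86, 29, 88, 28, 31]
      (by decide +kernel) (by decide +kernel) (by decide +kernel)
  · exact copy_of_code _ [16, 17, 68, 18, 83, 22, 84, 20, 86, 29, 88, 31, 82, 27, 92, 24, 25]
      (by decide +kernel) (by decide +kernel) (by decide +kernel)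
end

section
/- On the Weierstrass curve W : y² + t²xy + y = x³ over the rational function field F = 𝔽₂(t), the point (t, 1) is a nonsingular point of order exactly 6 in the group of points of W. -/
/-- The rational function field `F = 𝔽₂(t)`. -/
noncomputable abbrev F : Type := RatFunc (ZMod 2)

/-- The variable `t` of `𝔽₂(t)`. -/
noncomputable def t : F := RatFunc.X

/-- The Weierstrass curve `W : y² + t²xy + y = x³` over `𝔽₂(t)`. -/
noncomputable def W : WeierstrassCurve.Affine F :=
  { a₁ := t ^ 2, a₂ := 0, a₃ := 1, a₄ := 0, a₆ := 0 }

theorem t_ne_zero_aux : t ≠ 0 := RatFunc.X_ne_zero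

theorem t_cube_ne_one_aux : t ^ 3 ≠ 1 := by
  intro h
  have h2 : algebraMap (Polynomial (ZMod 2)) F (Polynomial.X ^ 3) = algebraMap _ F 1 := by
    rw [map_pow, RatFunc.algebraMap_X, map_one]; exact h
  have h3 := RatFunc.algebraMap_injective (ZMod 2) h2
  have h4 := congrArg Polynomial.natDegree h3
  simp at h4

theorem two_eq_zero_aux : (2 : F) = 0 := by
  have h : ((2 : ZMod 2)) = 0 := by decide
  have h1 := congrArg (algebraMap (ZMod 2) F) h
  rw [map_zero, map_ofNat] at h1
  exact h1

theorem nonsing_P_aux : W.Nonsingular t 1 := by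
  have h2 := two_eq_zero_aux
  rw [WeierstrassCurve.Affine.nonsingular_iff, WeierstrassCurve.Affine.equation_iff]
  refine ⟨by simp only [W]; linear_combination h2, Or.inr ?_⟩
  simp only [W]
  intro h
  apply t_cube_ne_one_aux
  linear_combination h - 2 * h2

theorem nonsing_Q_aux : W.Nonsingular 0 0 := by
  rw [WeierstrassCurve.Affine.nonsingular_iff, WeierstrassCurve.Affine.equation_iff]
  refine ⟨by simp [W], Or.inr (by simp [W])⟩

open scoped Classical in
theorem double_P_aux : WeierstrassCurve.Affine.Point.some t 1 nonsing_P_aux +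
    WeierstrassCurve.Affine.Point.some t 1 nonsing_P_aux =
    WeierstrassCurve.Affine.Point.some 0 0 nonsing_Q_aux := by
  have h2 := two_eq_zero_aux
  have hy : (1 : F) ≠ W.negY t 1 := by
    simp only [W, WeierstrassCurve.Affine.negY]
    intro h
    apply t_cube_ne_one_aux
    linear_combination h - 2 * h2
  have hs : W.slope t t 1 1 = 0 := by
    rw [WeierstrassCurve.Affine.slope_of_Y_ne rfl hy, div_eq_zero_iff]
    left
    simp only [W]
    linear_combination h2 * t ^ 2
  rw [WeierstrassCurve.Affine.Point.add_self_of_Y_ne hy,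
    WeierstrassCurve.Affine.Point.some.injEq, hs]
  have hx : W.addX t t 0 = 0 := by
    simp only [W, WeierstrassCurve.Affine.addX]
    linear_combination (-t) * h2
  refine ⟨hx, ?_⟩
  rw [WeierstrassCurve.Affine.addY, WeierstrassCurve.Affine.negAddY, hx]
  simp only [W, WeierstrassCurve.Affine.negY]
  linear_combination -h2

open scoped Classical in
theorem double_Q_aux : WeierstrassCurve.Affine.Point.some 0 0 nonsing_Q_aux +
    WeierstrassCurve.Affine.Point.some 0 0 nonsing_Q_aux =
    -WeierstrassCurve.Affine.Point.some 0 0 nonsing_Q_aux := by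
  have hy : (0 : F) ≠ W.negY 0 0 := by
    simp [W, WeierstrassCurve.Affine.negY]
  have hs : W.slope 0 0 0 0 = 0 := by
    rw [WeierstrassCurve.Affine.slope_of_Y_ne rfl hy, div_eq_zero_iff]
    left
    simp [W]
  rw [WeierstrassCurve.Affine.Point.add_self_of_Y_ne hy, WeierstrassCurve.Affine.Point.neg_some,
    WeierstrassCurve.Affine.Point.some.injEq, hs]
  simp [W, WeierstrassCurve.Affine.addX, WeierstrassCurve.Affine.addY,
    WeierstrassCurve.Affine.negAddY, WeierstrassCurve.Affine.negY]

open scoped Classical in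
/-- On `W : y² + t²xy + y = x³` over `𝔽₂(t)`, the point `(t, 1)` is a nonsingular point
of order exactly 6 in the group of points of `W`. -/
theorem point_t_one_has_order_six :
    ∃ h : W.Nonsingular t 1, addOrderOf (WeierstrassCurve.Affine.Point.some t 1 h) = 6 := by
  refine ⟨nonsing_P_aux, ?_⟩
  have hP := double_P_aux
  have hQ := double_Q_aux
  have hQ0 : WeierstrassCurve.Affine.Point.some 0 0 nonsing_Q_aux ≠ 0 :=
    WeierstrassCurve.Affine.Point.some_ne_zero _
  have hQP : WeierstrassCurve.Affine.Point.some 0 0 nonsing_Q_aux ≠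
      -WeierstrassCurve.Affine.Point.some t 1 nonsing_P_aux := by
    rw [WeierstrassCurve.Affine.Point.neg_some, Ne, WeierstrassCurve.Affine.Point.some.injEq]
    exact fun h => t_ne_zero_aux h.1.symm
  generalize WeierstrassCurve.Affine.Point.some 0 0 nonsing_Q_aux = Q at *
  generalize WeierstrassCurve.Affine.Point.some t 1 nonsing_P_aux = P at *
  have h2 : 2 • P = Q := by rw [two_nsmul, hP]
  have h3 : 3 • P = Q + P := by rw [succ_nsmul, h2]
  have h6 : 6 • P = 0 := by
    rw [show 6 = 2 * 3 from rfl, mul_nsmul, h2, succ_nsmul, two_nsmul, hQ, neg_add_cancel]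
  apply addOrderOf_eq_of_nsmul_and_div_prime_nsmul (by norm_num) h6
  intro p hp hd
  have hle := Nat.le_of_dvd (by norm_num) hd
  have hp2 := hp.two_le
  interval_cases p
  · rw [show 6 / 2 = 3 from rfl, h3]
    exact fun h => hQP (eq_neg_of_add_eq_zero_left h)
  · rw [show 6 / 3 = 2 from rfl, h2]
    exact hQ0
  · omega
  · omega
  · exact absurd hp (by norm_num)
end
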